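/- The Filtered Greedy Strategy is a 3-approximation for LTSP: let B be any schedule obtained from the Greedy Strategy schedule B1^GS by repeatedly removing an atomic mini-batch (f,f) that satisfies Inequality (2) with respect to the current schedule, until no such mini-batch remains. Then v(B) ≤ v(B1^GS), and consequently v(B) ≤ 3 · v(B1) for every schedule B1. -/

import Mathlib

/-!
Both claims reduce to schedules consisting of atomic mini-batches only, encoded here by the set `S`
of files they read. In such a schedule a file `f ∈ S` is answered at time
`m - p(f) + 2 ∑_{g ∈ S, g > f} s(g)`, where `p` is the left edge, and any other file at time
`m + 2 ∑_{g ∈ S} s(g) + p(f)` (`resp_diag_of_mem`, `resp_diag_of_notMem`).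

*Filtering does not increase the cost.* When `f` leaves `S`, every file to its left and every
unread file to its right gains `2 s(f)`, the read files to its right are unaffected, and `f` itself
loses `2 (p(f) + ∑_{g ∈ S, g < f} s(g))` (`resp_diag_erase`). Weighting by `n`, the total gain is
twice the right-hand side of Inequality (2), and the total loss is less than twice its left-hand
side, so Inequality (2) gives `v_erase_le`.

*The Greedy Strategy is a 3-approximation.* In every schedule the head needs at least `m - p(f)`
steps to reach `f` (`le_resp`), while under the Greedy Strategy the detours made before a file `f`
with `n(f) > 0` is read cover disjoint files to the right of `f`, which gives the bound
`3 (m - p(f))` (`resp_GS_le`).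
-/


open Finset

namespace LTSP

variable (N : ℕ) (s : Fin N → ℕ) (n : Fin N → ℕ)

/-- Left edge (0-based coordinate) of file `f`: file `f` occupies the blocks
`leftPos f + 1, …, leftPos f + s f` of the tape. -/
def leftPos (f : Fin N) : ℕ := ∑ j ∈ Finset.Iio f, s j

/-- Leftmost block of file `f`: `l(f) = 1 + ∑_{j<f} s j`. -/
def lB (f : Fin N) : ℕ := 1 + leftPos N s f

/-- Tape length `m = ∑ s f`. -/
def tapeLen : ℕ := ∑ j, s j

/-- Left edge `l(b)` (0-based coordinate) of a mini-batch `b = (b.1, b.2)`. -/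
def Lb (b : Fin N × Fin N) : ℕ := leftPos N s b.1

/-- Right edge of a mini-batch; numerically this equals its rightmost block `r(b)`. -/
def Rb (b : Fin N × Fin N) : ℕ := leftPos N s b.2 + s b.2

/-- Size of a mini-batch: `s(b) = r(b) - l(b) + 1`. -/
def sb (b : Fin N × Fin N) : ℕ := Rb N s b - Lb N s b

/-- `f ∈ F(b)` : file `f` is contained in the mini-batch `b`. -/
def Covers (b : Fin N × Fin N) (f : Fin N) : Prop := b.1 ≤ f ∧ f ≤ b.2

/-- `f ∈ F(B)` : file `f` is traversed by some mini-batch of the schedule `B`. -/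
def InF (B : Finset (Fin N × Fin N)) (f : Fin N) : Prop := ∃ b ∈ B, Covers N b f

/-- A schedule is a finite set of mini-batches, i.e. pairs `(f, f')` with `f ≤ f'`. -/
def Valid (B : Finset (Fin N × Fin N)) : Prop := ∀ b ∈ B, b.1 ≤ b.2

/-- `b'` is executed strictly before `b`: mini-batches are executed in decreasing order
of their leftmost blocks, ties broken by executing larger mini-batches first. -/
def ExecBefore (b' b : Fin N × Fin N) : Prop :=
  Lb N s b < Lb N s b' ∨ (Lb N s b' = Lb N s b ∧ Rb N s b < Rb N s b')

open scoped Classical in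
/-- Time step at which the read movement of mini-batch `b ∈ B` begins: the head starts at
position `m` at time `0`, moves left one block per time step, and detours `2 s(b')` time
steps for every mini-batch `b'` executed before `b`. -/
noncomputable def startTime (B : Finset (Fin N × Fin N)) (b : Fin N × Fin N) : ℕ :=
  (tapeLen N s - Lb N s b) + 2 * ∑ b' ∈ B.filter (fun b' => ExecBefore N s b' b), sb N s b'

/-- Time step at which the left-to-right traversal of file `f` within the read movement
of mini-batch `b` begins. -/
noncomputable def travTime (B : Finset (Fin N × Fin N)) (f : Fin N) (b : Fin N × Fin N) : ℕ :=
  startTime N s B b + (leftPos N s f - Lb N s b)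

/-- Time step at which Phase 2 begins (the head has descended the whole tape, detouring
`2 s(b)` time steps for each executed mini-batch). -/
noncomputable def phase2Start (B : Finset (Fin N × Fin N)) : ℕ :=
  tapeLen N s + 2 * ∑ b ∈ B, sb N s b

open scoped Classical in
/-- Response time of the requests of file `f` under schedule `B`: the time step at which the
first complete left-to-right traversal of `f` begins (within the first mini-batch of `B`
containing `f` if one exists, and during Phase 2 otherwise). -/
noncomputable def resp (B : Finset (Fin N × Fin N)) (f : Fin N) : ℕ :=
  if h : (B.filter (fun b => Covers N b f)).Nonempty then
    (B.filter (fun b => Covers N b f)).inf' h (travTime N s B f)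
  else phase2Start N s B + leftPos N s f

/-- Objective value of a schedule: the sum of the response times of all requests
(file `f` contributes `n f` times its response time). -/
noncomputable def v (B : Finset (Fin N × Fin N)) : ℕ :=
  ∑ f, n f * resp N s B f

/-- A schedule is optimal if its objective value is minimum among all schedules. -/
def Optimal (B : Finset (Fin N × Fin N)) : Prop :=
  Valid N B ∧ ∀ B' : Finset (Fin N × Fin N), Valid N B' → v N s n B ≤ v N s n B'

open scoped Classical in
/-- Left-hand side of Inequalities (1)/(2): `n(f)·(l(f) + ∑_{b ∈ B, r(b) < l(f)} s(b))`. -/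
noncomputable def ineqLHS (B : Finset (Fin N × Fin N)) (f : Fin N) : ℕ :=
  n f * (lB N s f + ∑ b ∈ B.filter (fun b => Rb N s b < lB N s f), sb N s b)

open scoped Classical in
/-- Right-hand side of Inequalities (1)/(2):
`s(f)·(∑_{f', l(f') < l(f)} n(f') + ∑_{f' ∉ F(B), l(f') > l(f)} n(f'))`. -/
noncomputable def ineqRHS (B : Finset (Fin N × Fin N)) (f : Fin N) : ℕ :=
  s f * ((∑ f' ∈ Finset.univ.filter (fun f' => lB N s f' < lB N s f), n f') +
    ∑ f' ∈ Finset.univ.filter (fun f' => ¬ InF N B f' ∧ lB N s f < lB N s f'), n f')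

/-- Inequality (1). -/
def Ineq1 (B : Finset (Fin N × Fin N)) (f : Fin N) : Prop :=
  ineqRHS N s n B f < ineqLHS N s n B f

/-- Inequality (2). -/
def Ineq2 (B : Finset (Fin N × Fin N)) (f : Fin N) : Prop :=
  ineqLHS N s n B f < ineqRHS N s n B f

/-- The Greedy Strategy schedule: one atomic mini-batch `(f, f)` for every file with at
least one request, except the leftmost file of the tape. -/
def GS (hN : 0 < N) : Finset (Fin N × Fin N) :=
  (Finset.univ.filter (fun f : Fin N => 0 < n f ∧ f ≠ ⟨0, hN⟩)).image (fun f => (f, f))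

/-- One step of the Filtered Greedy Strategy: remove an atomic mini-batch `(f, f)` that
satisfies Inequality (2) with respect to the current schedule. -/
def FGSStep (B B' : Finset (Fin N × Fin N)) : Prop :=
  ∃ f : Fin N, (f, f) ∈ B ∧ Ineq2 N s n B f ∧ B' = B.erase (f, f)

/-! ### Geometry of the tape -/

variable {N s n}

theorem leftPos_add_size (f : Fin N) : leftPos N s f + s f = ∑ j ∈ Finset.Iic f, s j := by
  rw [leftPos, ← Finset.Iio_insert, Finset.sum_insert (by simp), add_comm]

theorem leftPos_add_size_le {f g : Fin N} (h : f < g) :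
    leftPos N s f + s f ≤ leftPos N s g := by
  rw [leftPos_add_size]
  exact Finset.sum_le_sum_of_subset fun j hj =>
    Finset.mem_Iio.2 ((Finset.mem_Iic.1 hj).trans_lt h)

theorem leftPos_mono {f g : Fin N} (h : f ≤ g) : leftPos N s f ≤ leftPos N s g := by
  rcases h.eq_or_lt with rfl | h
  · exact le_rfl
  · exact (Nat.le_add_right _ _).trans (leftPos_add_size_le h)

theorem leftPos_lt_iff (hs : ∀ f, 1 ≤ s f) {f g : Fin N} :
    leftPos N s f < leftPos N s g ↔ f < g := by
  constructor
  · intro h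
    by_contra! hle
    exact absurd (leftPos_mono (s := s) hle) (by omega)
  · intro h
    have := leftPos_add_size_le (s := s) h
    have := hs f
    omega

theorem leftPos_add_size_add_sum_Ioi (f : Fin N) :
    leftPos N s f + s f + ∑ j ∈ Finset.univ.filter (fun j => f < j), s j = tapeLen N s := by
  rw [leftPos_add_size, tapeLen,
    ← Finset.sum_filter_add_sum_filter_not Finset.univ (fun j => f < j), add_comm]
  congr 2
  ext j
  simp

theorem leftPos_le_tapeLen (f : Fin N) : leftPos N s f ≤ tapeLen N s := by
  have := leftPos_add_size_add_sum_Ioi (s := s) f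
  omega

/-! ### Schedules of atomic mini-batches -/

/-- The schedule consisting of the atomic mini-batches `(f, f)` for `f ∈ S`. -/
def diag (S : Finset (Fin N)) : Finset (Fin N × Fin N) := S.image fun f => (f, f)

theorem mem_diag {S : Finset (Fin N)} {f : Fin N} : (f, f) ∈ diag S ↔ f ∈ S := by
  simp [diag]

theorem sb_atomic (f : Fin N) : sb N s (f, f) = s f := by
  simp [sb, Rb, Lb]

theorem inF_diag {S : Finset (Fin N)} {f : Fin N} : InF N (diag S) f ↔ f ∈ S := by
  constructor
  · rintro ⟨b, hb, h⟩
    obtain ⟨g, hg, rfl⟩ := Finset.mem_image.1 hb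
    exact le_antisymm h.1 h.2 ▸ hg
  · exact fun h => ⟨(f, f), mem_diag.2 h, le_rfl, le_rfl⟩

theorem sum_sb_diag (S : Finset (Fin N)) : ∑ b ∈ diag S, sb N s b = ∑ g ∈ S, s g := by
  rw [diag, Finset.sum_image fun a _ b _ h => (Prod.ext_iff.1 h).1]
  simp only [sb_atomic]

theorem sum_sb_diag_filter (S : Finset (Fin N)) (P : Fin N × Fin N → Prop) [DecidablePred P] :
    ∑ b ∈ (diag S).filter P, sb N s b = ∑ g ∈ S.filter (fun g => P (g, g)), s g := by
  rw [diag, Finset.filter_image, Finset.sum_image fun a _ b _ h => (Prod.ext_iff.1 h).1]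
  simp only [sb_atomic]

theorem diag_erase (S : Finset (Fin N)) (f : Fin N) :
    (diag S).erase (f, f) = diag (S.erase f) := by
  ext b
  simp only [diag, Finset.mem_erase, Finset.mem_image]
  constructor
  · rintro ⟨hb, g, hg, rfl⟩
    exact ⟨g, ⟨fun h => hb (by rw [h]), hg⟩, rfl⟩
  · rintro ⟨g, ⟨hgf, hg⟩, rfl⟩
    exact ⟨fun h => hgf (Prod.ext_iff.1 h).1, g, hg, rfl⟩

theorem execBefore_atomic (hs : ∀ f, 1 ≤ s f) {f g : Fin N} :
    ExecBefore N s (g, g) (f, f) ↔ f < g := by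
  rw [ExecBefore]
  simp only [Lb, Rb]
  constructor
  · rintro (h | ⟨h, h'⟩)
    · exact (leftPos_lt_iff hs).1 h
    · -- Distinct files have distinct left edges, so ties do not occur.
      rcases lt_trichotomy f g with hlt | rfl | hlt
      · exact hlt
      · omega
      · have := (leftPos_lt_iff hs).2 hlt
        omega
  · exact fun h => Or.inl ((leftPos_lt_iff hs).2 h)

theorem resp_diag_of_mem (hs : ∀ f, 1 ≤ s f) {S : Finset (Fin N)} {f : Fin N} (hf : f ∈ S) :
    resp N s (diag S) f =
      (tapeLen N s - leftPos N s f) + 2 * ∑ g ∈ S.filter (fun g => f < g), s g := by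
  classical
  have key : travTime N s (diag S) f (f, f) =
      (tapeLen N s - leftPos N s f) + 2 * ∑ g ∈ S.filter (fun g => f < g), s g := by
    rw [travTime, startTime, sum_sb_diag_filter]
    simp [execBefore_atomic hs, Lb]
  have hmem : (f, f) ∈ (diag S).filter (fun b => Covers N b f) :=
    Finset.mem_filter.2 ⟨mem_diag.2 hf, le_rfl, le_rfl⟩
  rw [← key, resp, dif_pos ⟨(f, f), by convert hmem⟩]
  apply le_antisymm
  · exact Finset.inf'_le _ (by convert hmem)
  · refine Finset.le_inf' _ _ fun b hb => ?_
    obtain ⟨hb, hc⟩ := Finset.mem_filter.1 hb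
    obtain ⟨g, -, rfl⟩ := Finset.mem_image.1 hb
    obtain rfl : g = f := le_antisymm hc.1 hc.2
    exact le_rfl

theorem resp_diag_of_notMem {S : Finset (Fin N)} {f : Fin N} (hf : f ∉ S) :
    resp N s (diag S) f = tapeLen N s + 2 * ∑ g ∈ S, s g + leftPos N s f := by
  classical
  rw [resp, dif_neg, phase2Start, sum_sb_diag]
  rintro ⟨b, hb⟩
  obtain ⟨hb, hc⟩ := Finset.mem_filter.1 hb
  exact hf (inF_diag.1 ⟨b, hb, hc⟩)

/-! ### Effect of removing one atomic mini-batch -/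

/-- Exact change of the response time of `g` when the atomic mini-batch of `f` is removed: the
summand on the left is the gain of `g`, the one on the right the loss, which is nonzero only for
`g = f`. -/
theorem resp_diag_erase (hs : ∀ f, 1 ≤ s f) {S : Finset (Fin N)} {f : Fin N} (hf : f ∈ S)
    (g : Fin N) :
    resp N s (diag (S.erase f)) g + (if g < f ∨ (g ∉ S ∧ f < g) then 2 * s f else 0) =
      resp N s (diag S) g +
        if g = f then 2 * (leftPos N s f + ∑ h ∈ S.filter (fun h => h < f), s h) else 0 := by
  have hsum : ∑ h ∈ S.erase f, s h + s f = ∑ h ∈ S, s h := Finset.sum_erase_add _ _ hf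
  by_cases hgf : g = f
  · subst hgf
    rw [resp_diag_of_mem hs hf, resp_diag_of_notMem (Finset.notMem_erase _ _)]
    have hsplit : ∑ h ∈ S.erase g, s h =
        ∑ h ∈ S.filter (fun h => h < g), s h + ∑ h ∈ S.filter (fun h => g < h), s h := by
      rw [← Finset.sum_union (Finset.disjoint_filter.2 fun h _ h1 h2 => lt_asymm h1 h2)]
      congr 1
      ext h
      simp only [Finset.mem_erase, Finset.mem_union, Finset.mem_filter, ne_iff_lt_or_gt]
      tauto
    have := leftPos_le_tapeLen (s := s) g
    simp only [lt_irrefl, and_false, or_self, if_false, if_true]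
    omega
  by_cases hg : g ∈ S
  · rw [resp_diag_of_mem hs hg, resp_diag_of_mem hs (Finset.mem_erase.2 ⟨hgf, hg⟩),
      Finset.filter_erase]
    by_cases hlt : g < f
    · have := Finset.sum_erase_add (S.filter (fun h => g < h)) s
        (Finset.mem_filter.2 ⟨hf, hlt⟩)
      simp only [hlt, hgf, true_or, if_true, if_false]
      omega
    · rw [Finset.erase_eq_of_notMem (by simp [hlt])]
      simp [hlt, hg, hgf]
  · rw [resp_diag_of_notMem hg, resp_diag_of_notMem fun h => hg (Finset.mem_of_mem_erase h)]
    have : g < f ∨ (g ∉ S ∧ f < g) := (lt_or_gt_of_ne hgf).imp id fun h => ⟨hg, h⟩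
    simp only [this, hgf, if_true, if_false]
    omega

theorem ineqLHS_diag (hs : ∀ f, 1 ≤ s f) (S : Finset (Fin N)) (f : Fin N) :
    ineqLHS N s n (diag S) f =
      n f * (1 + leftPos N s f + ∑ h ∈ S.filter (fun h => h < f), s h) := by
  classical
  rw [ineqLHS, sum_sb_diag_filter, lB]
  congr 3
  refine Finset.filter_congr fun h _ => ?_
  simp only [Rb]
  constructor
  · intro hlt
    by_contra! hle
    have := leftPos_mono (s := s) hle
    have := hs h
    omega
  · intro hlt
    have := leftPos_add_size_le (s := s) hlt
    omega

theorem ineqRHS_diag (hs : ∀ f, 1 ≤ s f) (S : Finset (Fin N)) (f : Fin N) :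
    ineqRHS N s n (diag S) f =
      ∑ g, n g * (if g < f ∨ (g ∉ S ∧ f < g) then s f else 0) := by
  classical
  have hlB : ∀ a b : Fin N, lB N s a < lB N s b ↔ a < b := fun a b => by
    rw [lB, lB, add_lt_add_iff_left, leftPos_lt_iff hs]
  simp only [ineqRHS, hlB, inF_diag]
  rw [← Finset.sum_union (Finset.disjoint_filter.2 fun g _ h1 h2 => lt_asymm h1 h2.2),
    ← Finset.filter_or, Finset.mul_sum, Finset.sum_filter]
  refine Finset.sum_congr rfl fun g _ => ?_
  split_ifs <;> ring

theorem v_erase_le (hs : ∀ f, 1 ≤ s f) {S : Finset (Fin N)} {f : Fin N} (hf : f ∈ S)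
    (h2 : Ineq2 N s n (diag S) f) :
    v N s n (diag (S.erase f)) ≤ v N s n (diag S) := by
  have key : v N s n (diag (S.erase f)) + 2 * ineqRHS N s n (diag S) f =
      v N s n (diag S) +
        2 * (n f * (leftPos N s f + ∑ h ∈ S.filter (fun h => h < f), s h)) := by
    have h := Finset.sum_congr (rfl : (Finset.univ : Finset (Fin N)) = Finset.univ) fun g _ =>
      congrArg (n g * ·) (resp_diag_erase hs hf g)
    simp only [mul_add (n _), Finset.sum_add_distrib, mul_ite, mul_zero,
      Finset.sum_ite_eq', Finset.mem_univ, if_true] at h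
    rw [ineqRHS_diag hs, v, v, Finset.mul_sum]
    simp only [mul_ite, mul_zero]
    convert h using 1
    · congr 1
      refine Finset.sum_congr rfl fun g _ => ?_
      split_ifs <;> ring
    · ring
  rw [Ineq2, ineqLHS_diag hs] at h2
  have : n f * (leftPos N s f + ∑ h ∈ S.filter (fun h => h < f), s h) ≤
      n f * (1 + leftPos N s f + ∑ h ∈ S.filter (fun h => h < f), s h) :=
    Nat.mul_le_mul_left _ (by omega)
  omega

theorem v_le_of_reachable (hs : ∀ f, 1 ≤ s f) {S : Finset (Fin N)} {B : Finset (Fin N × Fin N)}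
    (h : Relation.ReflTransGen (FGSStep N s n) (diag S) B) :
    v N s n B ≤ v N s n (diag S) := by
  suffices h' : ∃ T, B = diag T ∧ v N s n B ≤ v N s n (diag S) from h'.choose_spec.2
  induction h with
  | refl => exact ⟨S, rfl, le_rfl⟩
  | tail _ hstep ih =>
    obtain ⟨T, rfl, hle⟩ := ih
    obtain ⟨f, hf, h2, rfl⟩ := hstep
    rw [diag_erase]
    exact ⟨_, rfl, (v_erase_le hs (mem_diag.1 hf) h2).trans hle⟩

/-! ### The Greedy Strategy is a 3-approximation -/

/-- No schedule answers `f` before the head could have moved straight from `m` to `f`. -/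
theorem le_resp (B : Finset (Fin N × Fin N)) (f : Fin N) :
    tapeLen N s - leftPos N s f ≤ resp N s B f := by
  classical
  rw [resp]
  split_ifs with h
  · refine Finset.le_inf' _ _ fun b hb => ?_
    have hle : Lb N s b ≤ leftPos N s f := leftPos_mono (Finset.mem_filter.1 hb).2.1
    rw [travTime, startTime]
    omega
  · rw [phase2Start]
    omega

theorem resp_GS_le (hN : 0 < N) (hs : ∀ f, 1 ≤ s f) {f : Fin N} (hf : 0 < n f) :
    resp N s (GS N n hN) f ≤ 3 * (tapeLen N s - leftPos N s f) := by
  change resp N s (diag (Finset.univ.filter fun f : Fin N => 0 < n f ∧ f ≠ ⟨0, hN⟩)) f ≤ _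
  by_cases h0 : f = ⟨0, hN⟩
  · -- The leftmost file has left edge `0` and waits for Phase 2, which starts by time `3 m`.
    rw [resp_diag_of_notMem (by simp [h0])]
    have hp : leftPos N s f = 0 := by
      rw [leftPos, Finset.sum_eq_zero]
      intro j hj
      rw [Finset.mem_Iio, h0] at hj
      exact absurd hj (Nat.not_lt_zero _)
    have : ∑ g ∈ Finset.univ.filter (fun f : Fin N => 0 < n f ∧ f ≠ ⟨0, hN⟩), s g ≤
        tapeLen N s := Finset.sum_le_sum_of_subset (Finset.filter_subset _ _)
    omega
  · rw [resp_diag_of_mem hs (by simp [h0, hf]), Finset.filter_filter]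
    have h1 := leftPos_add_size_add_sum_Ioi (s := s) f
    have h2 : ∑ g ∈ Finset.univ.filter
        (fun g : Fin N => (0 < n g ∧ g ≠ ⟨0, hN⟩) ∧ f < g), s g ≤
        ∑ j ∈ Finset.univ.filter (fun j => f < j), s j :=
      Finset.sum_le_sum_of_subset (Finset.monotone_filter_right _ fun _ _ h => h.2)
    omega

theorem v_GS_le (hN : 0 < N) (hs : ∀ f, 1 ≤ s f) (B1 : Finset (Fin N × Fin N)) :
    v N s n (GS N n hN) ≤ 3 * v N s n B1 := by
  rw [v, v, Finset.mul_sum]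
  refine Finset.sum_le_sum fun f _ => ?_
  rcases Nat.eq_zero_or_pos (n f) with h | h
  · simp [h]
  · calc n f * resp N s (GS N n hN) f
        ≤ n f * (3 * (tapeLen N s - leftPos N s f)) :=
          Nat.mul_le_mul_left _ (resp_GS_le hN hs h)
      _ ≤ n f * (3 * resp N s B1 f) :=
          Nat.mul_le_mul_left _ (Nat.mul_le_mul_left _ (le_resp B1 f))
      _ = 3 * (n f * resp N s B1 f) := by ring

variable (N s n)

/-- The Filtered Greedy Strategy is a 3-approximation for LTSP: any schedule `B` obtained
from the Greedy Strategy schedule by repeatedly removing atomic mini-batches satisfying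
Inequality (2), until none remains, satisfies `v(B) ≤ v(B1^GS)` and `v(B) ≤ 3 · v(B1)` for
every schedule `B1`. -/
theorem stmt12 (hN : 0 < N) (hs : ∀ f, 1 ≤ s f) (B : Finset (Fin N × Fin N))
    (hreach : Relation.ReflTransGen (FGSStep N s n) (GS N n hN) B)
    (hterm : ¬ ∃ f : Fin N, (f, f) ∈ B ∧ Ineq2 N s n B f) :
    v N s n B ≤ v N s n (GS N n hN) ∧
      ∀ B1 : Finset (Fin N × Fin N), Valid N B1 → v N s n B ≤ 3 * v N s n B1 := by
  have h : v N s n B ≤ v N s n (GS N n hN) := v_le_of_reachable hs hreach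
  exact ⟨h, fun B1 _ => h.trans (v_GS_le hN hs B1)⟩

end LTSP
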